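/- The ratio of the minimal to maximal temperature on the hexagonal torus at t=1 is 2^{-1/3}: b(e^{-2π/√3}) / a(e^{-2π/√3}) = 2^{-1/3}, where a(q) = ∑_{(k,l)∈ℤ²} q^{k²+kl+l²} and b(q) = ∑_{(k,l)∈ℤ²} q^{k²+kl+l²} e^{2πi(k-l)/3}. -/

import Mathlib

noncomputable section

/-- Theta-null `θ₂(q) = ∑_{k∈ℤ} q^{(k+1/2)²}`. -/
def theta2 (q : ℝ) : ℝ := ∑' k : ℤ, q ^ (((k : ℝ) + 1/2)^2)

/-- Theta-null `θ₃(q) = ∑_{k∈ℤ} q^{k²}`. -/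
def theta3 (q : ℝ) : ℝ := ∑' k : ℤ, q ^ (k^2)

/-- Theta-null `θ₄(q) = ∑_{k∈ℤ} (-1)^k q^{k²}`. -/
def theta4 (q : ℝ) : ℝ := ∑' k : ℤ, (-1 : ℝ) ^ k * q ^ (k^2)

/-- Jacobi theta function `θ₃(z,q) = ∑_{k∈ℤ} q^{k²} e^{2πikz}` (real-valued for real z, q∈(0,1)). -/
def jTheta3 (z q : ℝ) : ℝ :=
  (∑' k : ℤ, (q : ℂ) ^ (k^2) * Complex.exp (2 * Real.pi * Complex.I * k * z)).re

/-- Jacobi theta function as a complex number. -/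
def jTheta3C (z q : ℝ) : ℂ :=
  ∑' k : ℤ, (q : ℂ) ^ (k^2) * Complex.exp (2 * Real.pi * Complex.I * k * z)

/-- Gauss hypergeometric series `₂F₁(a,b;c;x)`. -/
def hyp2F1 (a b c x : ℝ) : ℝ :=
  ∑' n : ℕ, ((ascPochhammer ℝ n).eval a * (ascPochhammer ℝ n).eval b /
    (ascPochhammer ℝ n).eval c) * x ^ n / (n.factorial : ℝ)

/-- Borwein cubic theta function `a(q)`. -/
def borA (q : ℝ) : ℝ := ∑' p : ℤ × ℤ, q ^ (p.1^2 + p.1 * p.2 + p.2^2)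

/-- Borwein cubic theta function `b(q)` (real-valued). -/
def borB (q : ℝ) : ℝ :=
  (∑' p : ℤ × ℤ, (q : ℂ) ^ (p.1^2 + p.1 * p.2 + p.2^2) *
    Complex.exp (2 * Real.pi * Complex.I * (((p.1 : ℝ) - (p.2 : ℝ)) / 3))).re

/-- Borwein cubic theta function `c(q)`. -/
def borC (q : ℝ) : ℝ :=
  ∑' p : ℤ × ℤ, q ^ ((((p.1 : ℝ)) + 1/3)^2 + ((p.1 : ℝ) + 1/3) * ((p.2 : ℝ) + 1/3) +
    (((p.2 : ℝ)) + 1/3)^2)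

/-- Periodized Gaussian (heat kernel) on the torus ℝ²/(Sℤ²). -/
def heatK (S : Matrix.SpecialLinearGroup (Fin 2) ℝ) (t : ℝ) (z : Fin 2 → ℝ) : ℝ :=
  (1/t) * ∑' l : Fin 2 → ℤ,
    Real.exp (-(Real.pi / t) *
      (((S : Matrix (Fin 2) (Fin 2) ℝ).mulVec (fun i => (l i : ℝ) + z i) 0)^2 +
       ((S : Matrix (Fin 2) (Fin 2) ℝ).mulVec (fun i => (l i : ℝ) + z i) 1)^2))

end

open scoped ENNReal

namespace Hex

/-- Eisenstein integers, with basis `1, ζ` and `ζ² = ζ - 1`. -/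
abbrev E := QuadraticAlgebra ℤ (-1) 1

/-- the sixth root of unity -/
def Z : E := ⟨0, 1⟩

/-- the square root of `-3` -/
def th : E := 2 * Z - 1

lemma hZ : Z ^ 2 = Z - 1 := by
  rw [pow_two]; ext <;> simp [Z, QuadraticAlgebra.re_one, QuadraticAlgebra.im_one]

lemma norm_eq (x : E) : x.norm = x.re ^ 2 + x.re * x.im + x.im ^ 2 := by
  rw [QuadraticAlgebra.norm_def]; ring

lemma th_eq (x : E) : th * x = ⟨-x.re - 2 * x.im, 2 * x.re + x.im⟩ := by
  have h : th = ⟨-1, 2⟩ := by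
    ext <;> simp [th, Z, two_mul, QuadraticAlgebra.re_one, QuadraticAlgebra.im_one]
  rw [h]; ext <;> simp <;> ring

lemma norm_th (x : E) : (th * x).norm = 3 * x.norm := by
  rw [th_eq, norm_eq, norm_eq]; ring

lemma Z_eq (x : E) : Z * x = ⟨- x.im, x.re + x.im⟩ := by
  ext <;> simp [Z]

lemma norm_Z (x : E) : (Z * x).norm = x.norm := by
  rw [Z_eq, norm_eq, norm_eq]; ring

/-- coordinates -/
def eqv1 : ℤ × ℤ ≃ E where
  toFun p := ⟨p.1 + p.2, p.2⟩
  invFun x := (x.re - x.im, x.im)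
  left_inv p := by ext <;> simp
  right_inv x := by ext <;> simp

/-- coordinates -/
def eqv2 : ℤ × ℤ ≃ E where
  toFun p := ⟨p.2 + p.1, -2 * p.1 - p.2⟩
  invFun x := (-(x.re + x.im), 2 * x.re + x.im)
  left_inv p := by ext <;> simp <;> ring
  right_inv x := by ext <;> simp <;> ring

lemma th_sq : th * th = -3 := by
  unfold th; linear_combination 4 * hZ

lemma split (h : E → ℝ≥0∞) :
    ∑' p, h p = ∑' y, h (th * y) + ∑' y, h (1 + th * y) + ∑' y, h (-1 + th * y) := by
  have e3 : ∑' y, h (-1 + th * y) = ∑' y, h (2 + th * y) := by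
    rw [← (Equiv.subRight th).tsum_eq]
    refine tsum_congr fun y => ?_
    congr 1
    simp only [Equiv.subRight_apply]
    linear_combination -th_sq
  have key : ∀ (r : ℤ) (n l : ℤ), eqv1 (3 * n + r, l) = (r : E) + th * eqv2 (n, l) := by
    intro r n l
    rw [th_eq]
    ext <;> simp [eqv1, eqv2] <;> ring
  rw [e3, ← eqv1.tsum_eq, ENNReal.tsum_prod', ← (Int.divModEquiv 3).symm.tsum_eq,
    ENNReal.tsum_prod']
  have : ∀ r : ℤ, ∑' y, h ((r : E) + th * y) = ∑' n : ℤ, ∑' l : ℤ, h (eqv1 (3 * n + r, l)) := by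
    intro r
    rw [← eqv2.tsum_eq, ENNReal.tsum_prod']
    simp_rw [key]
  have h0 := this 0
  have h1 := this 1
  have h2 := this 2
  simp only [Int.cast_zero, zero_add, Int.cast_one, Int.cast_ofNat] at h0 h1 h2
  rw [h0, h1, h2, ← ENNReal.tsum_add, ← ENNReal.tsum_add]
  refine tsum_congr fun n => ?_
  rw [tsum_fintype, Fin.sum_univ_three]
  simp [Int.divModEquiv, mul_comm]

lemma shift (h : E → ℝ≥0∞) (a : E) : ∑' y, h (y + a) = ∑' y, h y :=
  (Equiv.addRight a).tsum_eq h

lemma negsum (h : E → ℝ≥0∞) : ∑' y, h (-y) = ∑' y, h y :=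
  (Equiv.neg E).tsum_eq h

/-- Gaussian weight -/
noncomputable def g (s : ℝ) (x : E) : ℝ≥0∞ := ENNReal.ofReal (Real.exp (-(s * (x.norm : ℝ))))

lemma g_neg (s : ℝ) (x : E) : g s (-x) = g s x := by
  unfold g; rw [QuadraticAlgebra.norm_neg]

lemma g_Z (s : ℝ) (x : E) : g s (Z * x) = g s x := by
  unfold g; rw [norm_Z]

lemma g_th (s : ℝ) (x : E) : g s (th * x) = g (3 * s) x := by
  unfold g; rw [norm_th]; push_cast; congr 3; ring

/-- coset sum -/
noncomputable def P (s : ℝ) (r : E) : ℝ≥0∞ := ∑' y, g s (r + th * y)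

/-- finer coset sum -/
noncomputable def H (s : ℝ) (r : E) : ℝ≥0∞ := ∑' y, g s (r + 3 * y)

lemma P_per (s : ℝ) (r z : E) : P s (r + th * z) = P s r := by
  unfold P
  rw [← shift (fun y => g s (r + th * y)) z]
  refine tsum_congr fun y => ?_
  congr 1; ring

lemma P_neg (s : ℝ) (r : E) : P s (-r) = P s r := by
  unfold P
  rw [← negsum]
  refine tsum_congr fun y => ?_
  rw [← g_neg]; congr 1; ring

lemma H_per (s : ℝ) (r z : E) : H s (r + 3 * z) = H s r := by
  unfold H
  rw [← shift (fun y => g s (r + 3 * y)) z]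
  refine tsum_congr fun y => ?_
  congr 1; ring

lemma H_neg (s : ℝ) (r : E) : H s (-r) = H s r := by
  unfold H
  rw [← negsum]
  refine tsum_congr fun y => ?_
  rw [← g_neg]; congr 1; ring

/-- multiplication by ζ -/
def eqvZ : E ≃ E where
  toFun x := Z * x
  invFun x := (1 - Z) * x
  left_inv x := by linear_combination -x * hZ
  right_inv x := by linear_combination -x * hZ

lemma H_Z (s : ℝ) (r : E) : H s (Z * r) = H s r := by
  unfold H
  rw [← eqvZ.tsum_eq]
  refine tsum_congr fun y => ?_
  rw [← g_Z s (r + 3 * y)]; congr 1; simp only [eqvZ, Equiv.coe_fn_mk]; ring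

lemma H_om (s : ℝ) (r : E) : H s ((Z - 1) * r) = H s r := by
  rw [← hZ, pow_two, mul_assoc, H_Z, H_Z]

lemma H_step (s : ℝ) (y : E) : H s (1 + th * (y + 1)) = H s (1 + th * y) := by
  rw [← H_om s (1 + th * (y+1))]
  rw [← H_per s (1 + th * y) (-(Z * y + 1))]
  congr 1
  unfold th
  linear_combination (2 * y + 2) * hZ

lemma H_one (s : ℝ) (y : E) : H s (1 + th * y) = H s 1 := by
  have h1 : ∀ n : ℕ, ∀ y : E, H s (1 + th * (y + n)) = H s (1 + th * y) := by
    intro n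
    induction n with
    | zero => simp
    | succ n ih =>
      intro y
      push_cast
      rw [← add_assoc, H_step, ih]
  have h2 : ∀ n : ℤ, H s (1 + th * n) = H s 1 := by
    intro n
    obtain ⟨m, rfl | rfl⟩ := n.eq_nat_or_neg
    · have := h1 m 0
      simpa using this
    · have := h1 m (-m)
      simpa using this.symm
  rw [← h2 (y.re - y.im)]
  rw [← H_per s (1 + th * ((y.re - y.im : ℤ) : E)) (-(1 - Z) * y.im)]
  congr 1
  have hy : y = y.re + y.im * Z := by
    ext <;> simp [Z]
  generalize y.re = k at *
  generalize y.im = l at *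
  rw [hy]
  unfold th
  push_cast
  linear_combination (2 * (l : E)) * hZ

lemma P_one (s : ℝ) : P s 1 = 3 * H s 1 := by
  unfold P
  rw [split]
  have : ∀ a : E, ∑' y, g s (1 + th * (a + th * y)) = H s 1 := by
    intro a
    rw [← H_one s a]; unfold H
    rw [← negsum]
    refine tsum_congr fun y => ?_
    congr 1; linear_combination -y * th_sq
  have h0 := this 0
  simp only [zero_add] at h0
  rw [h0, this, this]; ring

lemma H_th (s : ℝ) (r : E) : H s (th * r) = P (3 * s) r := by
  unfold H P
  rw [← negsum]
  refine tsum_congr fun y => ?_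
  rw [← g_th]; congr 1; linear_combination -y * th_sq

/-- the substitution -/
def eqv3 : E × E × E ≃ E × E × E where
  toFun p := (p.1 - (Z - 1) * p.2.2 + Z * (p.2.2 + p.2.1), p.2.2, p.2.2 + p.2.1)
  invFun p := (p.1 + (Z - 1) * p.2.1 - Z * p.2.2, p.2.2 - p.2.1, p.2.1)
  left_inv p := by
    ext1
    · simp only []; ring
    · ext1 <;> simp
  right_inv p := by
    ext1
    · simp only []; ring
    · ext1 <;> simp

lemma cube (s : ℝ) : P s 1 ^ 3 = ∑' v, g s v * ∑' d, g s (v + th * d) *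
    H s (v - th - (Z - 1) * th * d) := by
  have e1 : P s 1 ^ 3 = ∑' p : E × E × E, g s (1 + th * p.1) *
      (g s (1 + th * p.2.1) * g s (1 + th * p.2.2)) := by
    rw [ENNReal.tsum_prod']
    simp_rw [ENNReal.tsum_mul_left, ENNReal.tsum_prod', ENNReal.tsum_mul_left, ENNReal.tsum_mul_right]
    unfold P; ring
  rw [e1, ← eqv3.tsum_eq, ENNReal.tsum_prod']
  refine tsum_congr fun v => ?_
  rw [ENNReal.tsum_prod', ← ENNReal.tsum_mul_left]
  refine tsum_congr fun d => ?_
  unfold H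
  rw [← ENNReal.tsum_mul_left, ← ENNReal.tsum_mul_left]
  refine tsum_congr fun y => ?_
  simp only [eqv3, Equiv.coe_fn_mk]
  unfold g
  simp only [← ENNReal.ofReal_mul (Real.exp_nonneg _), ← Real.exp_add]
  congr 2
  have : ∀ a b c a2 b2 c2 : ℤ, a + (b + c) = a2 + (b2 + c2) →
     -(s * (a:ℝ)) + (-(s * b) + -(s * c)) = -(s * (a2:ℝ)) + (-(s * b2) + -(s * c2)) := by
    intro a b c a2 b2 c2 h
    have : (a:ℝ) + (b + c) = a2 + (b2 + c2) := by exact_mod_cast h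
    linear_combination -s * this
  apply this
  rw [show (3 : E) * y = y + y + y by ring, show (Z - 1) * th * d = th * (Z * d) - th * d by ring]
  simp only [norm_eq, sub_mul, one_mul, Z_eq, th_eq, QuadraticAlgebra.re_add, QuadraticAlgebra.im_add, QuadraticAlgebra.re_sub, QuadraticAlgebra.im_sub, QuadraticAlgebra.re_one, QuadraticAlgebra.im_one]
  rw [show th = th * 1 by ring, th_eq]
  simp only [QuadraticAlgebra.re_one, QuadraticAlgebra.im_one]
  ring

lemma cubic (s : ℝ) : P s 1 ^ 3 = 2 * P s 1 ^ 2 * H s 1 +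
    3 * P (3 * s) 1 * (P (3 * s) 0 ^ 2 + P (3 * s) 0 * P (3 * s) 1 + P (3 * s) 1 ^ 2) := by
  rw [cube, split]
  have k1 : ∑' y, g s (1 + th * y) * ∑' d, g s (1 + th * y + th * d) *
      H s (1 + th * y - th - (Z - 1) * th * d) = P s 1 ^ 2 * H s 1 := by
    have : ∀ y, ∑' d, g s (1 + th * y + th * d) *
      H s (1 + th * y - th - (Z - 1) * th * d) = P s 1 * H s 1 := by
      intro y
      rw [← P_per s 1 y]; unfold P; rw [← ENNReal.tsum_mul_right]
      refine tsum_congr fun d => ?_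
      congr 1
      rw [← H_one s (y - 1 - (Z - 1) * d)]; congr 1; ring
    simp_rw [this, ENNReal.tsum_mul_right]
    change P s 1 * _ = _
    ring
  have k2 : ∑' y, g s (-1 + th * y) * ∑' d, g s (-1 + th * y + th * d) *
      H s (-1 + th * y - th - (Z - 1) * th * d) = P s 1 ^ 2 * H s 1 := by
    have : ∀ y, ∑' d, g s (-1 + th * y + th * d) *
      H s (-1 + th * y - th - (Z - 1) * th * d) = P s 1 * H s 1 := by
      intro y
      rw [← P_neg s 1, ← P_per s (-1) y]; unfold P; rw [← ENNReal.tsum_mul_right]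
      refine tsum_congr fun d => ?_
      congr 1
      rw [← H_one s (-(y - 1 - (Z - 1) * d)), ← H_neg]; congr 1; ring
    simp_rw [this, ENNReal.tsum_mul_right]
    change P s (-1) * _ = _
    rw [P_neg]
    ring
  have k0 : ∑' y, g s (th * y) * ∑' d, g s (th * y + th * d) *
      H s (th * y - th - (Z - 1) * th * d) = 3 * P (3 * s) 1 * (P (3 * s) 0 ^ 2 + P (3 * s) 0 * P (3 * s) 1 + P (3 * s) 1 ^ 2) := by
    have e : ∀ y, ∑' d, g s (th * y + th * d) * H s (th * y - th - (Z - 1) * th * d) =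
        ∑' e, g (3 * s) e * P (3 * s) (y + e + 1) := by
      intro y
      rw [← shift (fun e => g (3 * s) e * P (3 * s) (y + e + 1)) y]
      refine tsum_congr fun d => ?_
      rw [← g_th]
      congr 1
      · congr 1; ring
      · rw [show th * y - th - (Z - 1) * th * d = th * (y - 1 - (Z - 1) * d) by ring, H_th, ← P_neg _ (y + (d + y) + 1),
          ← P_per _ (-(y + (d + y) + 1)) (-th * y - Z * d)]
        congr 1
        unfold th
        linear_combination (4 * y + 2 * d) * hZ
    have pp : ∀ a b : E, P (3 * s) (a + th * b) = P (3 * s) a := P_per _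
    have f : ∀ y, ∑' e, g (3 * s) e * P (3 * s) (y + e + 1) =
       P (3 * s) 0 * P (3 * s) (y + 1) + P (3 * s) 1 * P (3 * s) (y + 2) +
        P (3 * s) 1 * P (3 * s) y := by
      intro y
      have q : ∀ i : E, ∑' e, g (3 * s) (i + th * e) * P (3 * s) (y + (i + th * e) + 1) =
         P (3 * s) i * P (3 * s) (y + i + 1) := by
        intro i
        conv_rhs => rw [P]
        rw [← ENNReal.tsum_mul_right]
        refine tsum_congr fun d => ?_
        congr 1
        rw [← pp (y + i + 1) d]; congr 1; ring
      have q0 := q 0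
      simp only [zero_add, add_zero] at q0
      rw [split, q0, q, q, P_neg, show y + -1 + 1 = y by ring, show y + 1 + 1 = y + 2 by ring]
    simp_rw [e, f, g_th]
    rw [split]
    have q : ∀ i : E, ∑' y, g (3 * s) (i + th * y) * (P (3 * s) 0 * P (3 * s) (i + th * y + 1) + P (3 * s) 1 * P (3 * s) (i + th * y + 2) +
        P (3 * s) 1 * P (3 * s) (i + th * y)) = P (3 * s) i * (P (3 * s) 0 * P (3 * s) (i + 1) + P (3 * s) 1 * P (3 * s) (i + 2) +
        P (3 * s) 1 * P (3 * s) i) := by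
      intro i
      have w : ∀ X, P (3 * s) i * X = ∑' d, g (3 * s) (i + th * d) * X := by
        intro X; rw [ENNReal.tsum_mul_right]; rfl
      rw [w]
      refine tsum_congr fun d => ?_
      rw [add_right_comm i _ 1, add_right_comm i _ 2, pp, pp, pp]
    have q0 := q 0
    simp only [zero_add] at q0
    have p2 : P (3 * s) 2 = P (3 * s) 1 := by
      rw [← P_neg _ 1, ← pp (-1) (-th)]
      congr 1
    have p3 : P (3 * s) (1 + 2) = P (3 * s) 0 := by
      rw [← pp 0 (-th)]
      congr 1
    rw [q0, q, q, p3, show (1 + 1 : E) = 2 by norm_num, show (-1 + 1 : E) = 0 by norm_num, show (-1 + 2 : E) = 1 by norm_num,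
      P_neg, p2]
    ring
  rw [k0, k1, k2]
  ring

end Hex

namespace Hex

lemma sum1 (s α : ℝ) (hs : 0 < s) : Summable fun k : ℤ => Real.exp (-(s * (k + α) ^ 2)) := by
  have := HurwitzKernelBounds.summable_f_int 0 α (t := s / Real.pi) (by positivity)
  refine this.congr fun k => ?_
  simp only [HurwitzKernelBounds.f_int, pow_zero, one_mul]
  congr 1
  field_simp

lemma sum2 (s α β : ℝ) (hs : 0 < s) : Summable fun p : ℤ × ℤ =>
    Real.exp (-(s * (p.1 + α) ^ 2)) * Real.exp (-(s * (p.2 + β) ^ 2)) :=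
  (sum1 s α hs).mul_of_nonneg (sum1 s β hs) (fun _ => Real.exp_nonneg _) (fun _ => Real.exp_nonneg _)

lemma sumN (s α β : ℝ) (hs : 0 < s) : Summable fun p : ℤ × ℤ =>
    Real.exp (-(s * ((p.1 + α) ^ 2 + (p.1 + α) * (p.2 + β) + (p.2 + β) ^ 2))) := by
  refine Summable.of_nonneg_of_le (fun _ => Real.exp_nonneg _) (fun p => ?_)
    (sum2 (s / 2) α β (by positivity))
  rw [← Real.exp_add]
  apply Real.exp_le_exp.mpr
  nlinarith [mul_nonneg hs.le (sq_nonneg ((p.1 + α) + (p.2 + β)))]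

lemma sumN0 (s : ℝ) (hs : 0 < s) : Summable fun p : ℤ × ℤ =>
    Real.exp (-(s * ((p.1 : ℝ) ^ 2 + p.1 * p.2 + p.2 ^ 2))) := by
  simpa using sumN s 0 0 hs

section poisson
open Complex

lemma poisB (l : ℤ) : ∑' k : ℤ, cexp (-(2 * Real.pi / (Real.sqrt 3 : ℝ) : ℂ) * (k ^ 2 + k * l + l ^ 2)
      + 2 * Real.pi * I * ((k - l) / 3)) =
    1 / ((2 / Real.sqrt 3 : ℝ) : ℂ) ^ (1 / 2 : ℂ) * ∑' m : ℤ,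
      cexp (-(Real.pi * (Real.sqrt 3 : ℝ) / 2 : ℂ) * (l ^ 2 + (m - 1 / 3) ^ 2) + Real.pi * I * (l * (m - 1))) := by
  have hr : 0 < Real.sqrt 3 := by positivity
  have hr2 : ((Real.sqrt 3 : ℝ) : ℂ) ^ 2 = 3 := by
    rw [← ofReal_pow, Real.sq_sqrt (by norm_num)]; norm_num
  have h0 : ((Real.sqrt 3 : ℝ) : ℂ) ≠ 0 := by exact_mod_cast hr.ne'
  have := Complex.tsum_exp_neg_quadratic (a := ((2 / Real.sqrt 3 : ℝ) : ℂ))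
    (by rw [ofReal_re]; positivity) (-l / (Real.sqrt 3 : ℝ) + I / 3)
  have e : ∀ k : ℤ, cexp (-(2 * Real.pi / (Real.sqrt 3 : ℝ) : ℂ) * (k ^ 2 + k * l + l ^ 2)
      + 2 * Real.pi * I * ((k - l) / 3)) = cexp (-(2 * Real.pi / (Real.sqrt 3 : ℝ) : ℂ) * l ^ 2 - 2 * Real.pi * I * l / 3) *
      cexp (-Real.pi * ((2 / Real.sqrt 3 : ℝ) : ℂ) * k ^ 2 + 2 * Real.pi * (-l / (Real.sqrt 3 : ℝ) + I / 3) * k) := by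
    intro k
    rw [← Complex.exp_add]; congr 1; push_cast; field_simp; ring
  simp_rw [e]
  rw [tsum_mul_left, this, mul_left_comm, ← tsum_mul_left]
  congr 1
  refine tsum_congr fun m => ?_
  rw [← Complex.exp_add]; congr 1; push_cast
  generalize ((Real.sqrt 3 : ℝ) : ℂ) = r at *
  have hi : (r : ℂ)⁻¹ = r / 3 := by rw [← hr2]; field_simp
  simp only [div_eq_mul_inv, mul_inv, inv_inv, hi]
  ring_nf
  simp only [I_sq, I_pow_four, show I ^ 3 = -I by rw [pow_succ, I_sq]; ring, show r ^ 3 = 3 * r by rw [pow_succ, hr2], hr2]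
  ring

lemma poisC (l : ℤ) : ∑' k : ℤ, cexp (-(2 * Real.pi / (Real.sqrt 3 : ℝ) : ℂ) *
      ((k + 1/3) ^ 2 + (k + 1/3) * (l + 1/3) + (l + 1/3) ^ 2)) =
    1 / ((2 / Real.sqrt 3 : ℝ) : ℂ) ^ (1 / 2 : ℂ) * ∑' m : ℤ,
      cexp (-(Real.pi * (Real.sqrt 3 : ℝ) / 2 : ℂ) * ((l + 1 / 3) ^ 2 + m ^ 2) + Real.pi * I * (m * (l + 1))) := by
  have hr : 0 < Real.sqrt 3 := by positivity
  have hr2 : ((Real.sqrt 3 : ℝ) : ℂ) ^ 2 = 3 := by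
    rw [← ofReal_pow, Real.sq_sqrt (by norm_num)]; norm_num
  have h0 : ((Real.sqrt 3 : ℝ) : ℂ) ≠ 0 := by exact_mod_cast hr.ne'
  have := Complex.tsum_exp_neg_quadratic (a := ((2 / Real.sqrt 3 : ℝ) : ℂ))
    (by rw [ofReal_re]; positivity) (-(l + 1) / (Real.sqrt 3 : ℝ))
  have e : ∀ k : ℤ, cexp (-(2 * Real.pi / (Real.sqrt 3 : ℝ) : ℂ) *
      ((k + 1/3) ^ 2 + (k + 1/3) * (l + 1/3) + (l + 1/3) ^ 2)) =
       cexp (-(2 * Real.pi / (Real.sqrt 3 : ℝ) : ℂ) * (1 / 9 + (l + 1/3) / 3 + (l + 1/3)^2)) *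
      cexp (-Real.pi * ((2 / Real.sqrt 3 : ℝ) : ℂ) * k ^ 2 + 2 * Real.pi * (-(l + 1) / (Real.sqrt 3 : ℝ)) * k) := by
    intro k
    rw [← Complex.exp_add]; congr 1; push_cast; field_simp; ring
  simp_rw [e]
  rw [tsum_mul_left, this, mul_left_comm, ← tsum_mul_left]
  congr 1
  refine tsum_congr fun m => ?_
  rw [← Complex.exp_add]; congr 1; push_cast
  generalize ((Real.sqrt 3 : ℝ) : ℂ) = r at *
  have hi : (r : ℂ)⁻¹ = r / 3 := by rw [← hr2]; field_simp
  simp only [div_eq_mul_inv, mul_inv, inv_inv, hi]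
  ring_nf
  simp only [I_sq, I_pow_four, show I ^ 3 = -I by rw [pow_succ, I_sq]; ring, show r ^ 3 = 3 * r by rw [pow_succ, hr2], hr2]
  ring

lemma swapFG : ∑' l : ℤ, ∑' m : ℤ, cexp (-(Real.pi * (Real.sqrt 3 : ℝ) / 2 : ℂ) * (l ^ 2 + (m - 1 / 3) ^ 2) + Real.pi * I * (l * (m - 1))) =
   ∑' l : ℤ, ∑' m : ℤ, cexp (-(Real.pi * (Real.sqrt 3 : ℝ) / 2 : ℂ) * ((l + 1 / 3) ^ 2 + m ^ 2) + Real.pi * I * (m * (l + 1))) := by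
  have hs : Summable (Function.uncurry fun l m : ℤ => cexp (-(Real.pi * (Real.sqrt 3 : ℝ) / 2 : ℂ) * (l ^ 2 + (m - 1 / 3) ^ 2) + Real.pi * I * (l * (m - 1)))) := by
    apply Summable.of_norm
    refine (sum2 (Real.pi * Real.sqrt 3 / 2) 0 (-1/3) (by positivity)).congr fun p => ?_
    obtain ⟨l, m⟩ := p
    simp only [Function.uncurry_apply_pair]
    rw [Complex.norm_exp, ← Real.exp_add]
    congr 1
    rw [show (-(Real.pi * (Real.sqrt 3 : ℝ) / 2 : ℂ) * (l ^ 2 + (m - 1 / 3) ^ 2) + Real.pi * I * (l * (m - 1))) =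
      ((-(Real.pi * Real.sqrt 3 / 2) * (l ^ 2 + (m - 1 / 3) ^ 2) : ℝ) : ℂ) + ((Real.pi * (l * (m - 1)) : ℝ) : ℂ) * I by push_cast; ring]
    simp only [add_re, ofReal_re, re_ofReal_mul, I_re]
    ring
  rw [← hs.tsum_comm, ← (Equiv.neg ℤ).tsum_eq]
  refine tsum_congr fun l => tsum_congr fun m => ?_
  simp only [Equiv.neg_apply]
  rw [Complex.exp_eq_exp_iff_exists_int]
  refine ⟨-(m * (l + 1)), ?_⟩
  push_cast
  ring

lemma zpow_q (n : ℤ) : (Real.exp (-2 * Real.pi / Real.sqrt 3)) ^ n =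
    Real.exp (-(2 * Real.pi / Real.sqrt 3 * n)) := by
  rw [← Real.rpow_intCast, ← Real.exp_mul]; congr 1; ring

lemma rpow_q (x : ℝ) : (Real.exp (-2 * Real.pi / Real.sqrt 3)) ^ x =
    Real.exp (-(2 * Real.pi / Real.sqrt 3 * x)) := by
  rw [← Real.exp_mul]; congr 1; ring

lemma B_term (p : ℤ × ℤ) : ((Real.exp (-2 * Real.pi / Real.sqrt 3) : ℝ) : ℂ) ^ (p.1^2 + p.1 * p.2 + p.2^2) *
    Complex.exp (2 * Real.pi * Complex.I * (((p.1 : ℝ) - (p.2 : ℝ)) / 3)) =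
    (Real.exp (-(2 * Real.pi / Real.sqrt 3 * ((p.1 : ℝ) ^ 2 + p.1 * p.2 + p.2 ^ 2))) : ℝ) *
     Complex.exp ((2 * Real.pi * (((p.1 : ℝ) - (p.2 : ℝ)) / 3) : ℝ) * I) := by
  rw [← ofReal_zpow, zpow_q]
  push_cast
  congr 2
  ring

lemma B_summable : Summable fun p : ℤ × ℤ => ((Real.exp (-2 * Real.pi / Real.sqrt 3) : ℝ) : ℂ) ^ (p.1^2 + p.1 * p.2 + p.2^2) *
    Complex.exp (2 * Real.pi * Complex.I * (((p.1 : ℝ) - (p.2 : ℝ)) / 3)) := by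
  apply Summable.of_norm
  refine (sumN0 (2 * Real.pi / Real.sqrt 3) (by positivity)).congr fun p => ?_
  rw [B_term, norm_mul, Complex.norm_exp_ofReal_mul_I, mul_one, Complex.norm_of_nonneg (Real.exp_nonneg _)]

lemma tsum_swap {f : ℤ × ℤ → ℂ} (h : Summable f) : ∑' p, f p = ∑' l, ∑' k, f (k, l) := by
  rw [← (Equiv.prodComm ℤ ℤ).tsum_eq]
  exact Summable.tsum_prod ((Equiv.prodComm ℤ ℤ).summable_iff.mpr h)

lemma B_eq_C : borB (Real.exp (-2 * Real.pi / Real.sqrt 3)) = borC (Real.exp (-2 * Real.pi / Real.sqrt 3)) := by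
  have h1 := B_summable
  have h2 := sumN (2 * Real.pi / Real.sqrt 3) (1/3) (1/3) (by positivity)
  have h3 : Summable fun p : ℤ × ℤ => ((Real.exp (-(2 * Real.pi / Real.sqrt 3 * ((p.1 + 1/3) ^ 2 + (p.1 + 1/3) * (p.2 + 1/3) + (p.2 + 1/3) ^ 2))) : ℝ) : ℂ) := by
    exact_mod_cast h2
  have e : ((borC (Real.exp (-2 * Real.pi / Real.sqrt 3)) : ℝ) : ℂ) =
     ∑' p : ℤ × ℤ, ((Real.exp (-2 * Real.pi / Real.sqrt 3) : ℝ) : ℂ) ^ (p.1^2 + p.1 * p.2 + p.2^2) *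
    Complex.exp (2 * Real.pi * Complex.I * (((p.1 : ℝ) - (p.2 : ℝ)) / 3)) := by
    unfold borC
    simp_rw [rpow_q]
    rw [ofReal_tsum, tsum_swap h3, tsum_swap h1]
    trans 1 / ((2 / Real.sqrt 3 : ℝ) : ℂ) ^ (1 / 2 : ℂ) * ∑' l : ℤ, ∑' m : ℤ, cexp (-(Real.pi * (Real.sqrt 3 : ℝ) / 2 : ℂ) * ((l + 1 / 3) ^ 2 + m ^ 2) + Real.pi * I * (m * (l + 1)))
    · rw [← tsum_mul_left]
      refine tsum_congr fun l => ?_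
      rw [← poisC]
      refine tsum_congr fun k => ?_
      push_cast; congr 1; ring
    · rw [← swapFG, ← tsum_mul_left]
      refine tsum_congr fun l => ?_
      rw [← poisB]
      refine tsum_congr fun k => ?_
      rw [B_term]
      push_cast
      rw [← Complex.exp_add]
      congr 1; ring
  unfold borB
  rw [← e, ofReal_re]

end poisson
end Hex

namespace Hex

/-- identification of `ℤ²` with the Eisenstein integers -/
def eqv0 : ℤ × ℤ ≃ E := (QuadraticAlgebra.equivProd (-1) 1).symm

lemma g_eqv0 (s : ℝ) (p : ℤ × ℤ) : g s (eqv0 p) =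
    ENNReal.ofReal (Real.exp (-(s * ((p.1 : ℝ) ^ 2 + p.1 * p.2 + p.2 ^ 2)))) := by
  unfold g
  rw [norm_eq]
  simp [eqv0]

lemma tot_ne_top (s : ℝ) (hs : 0 < s) : ∑' x, g s x ≠ ∞ := by
  rw [← eqv0.tsum_eq]
  simp_rw [g_eqv0]
  exact (sumN0 s hs).tsum_ofReal_ne_top

lemma tot_eq (s : ℝ) : ∑' x, g s x = P s 0 + 2 * P s 1 := by
  rw [split]
  have : P s 0 = ∑' y, g s (th * y) := by simp [P]
  rw [this, ← P.eq_1, ← P.eq_1, P_neg]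
  ring

lemma P0_ne_top (s : ℝ) (hs : 0 < s) : P s 0 ≠ ∞ := by
  have := tot_ne_top s hs
  rw [tot_eq] at this
  exact (ENNReal.add_ne_top.mp this).1

lemma P1_ne_top (s : ℝ) (hs : 0 < s) : P s 1 ≠ ∞ := by
  have := tot_ne_top s hs
  rw [tot_eq] at this
  intro h
  simp [h] at this

lemma A_eq : borA (Real.exp (-2 * Real.pi / Real.sqrt 3)) =
    (P (2 * Real.pi / Real.sqrt 3) 0).toReal + 2 * (P (2 * Real.pi / Real.sqrt 3) 1).toReal := by
  have hs : 0 < 2 * Real.pi / Real.sqrt 3 := by positivity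
  have h := congrArg ENNReal.toReal (tot_eq (2 * Real.pi / Real.sqrt 3))
  rw [ENNReal.toReal_add (P0_ne_top _ hs) (ENNReal.mul_ne_top (by simp) (P1_ne_top _ hs)),
    ENNReal.toReal_mul, ENNReal.toReal_ofNat] at h
  rw [← h, ← eqv0.tsum_eq, ENNReal.tsum_toReal_eq (fun _ => by simp [g])]
  unfold borA
  refine tsum_congr fun p => ?_
  rw [zpow_q, g_eqv0, ENNReal.toReal_ofReal (Real.exp_nonneg _)]
  push_cast; rfl

lemma C_eq : borC (Real.exp (-2 * Real.pi / Real.sqrt 3)) =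
    (P (2 * Real.pi / Real.sqrt 3 / 3) 1).toReal := by
  rw [← P_per _ 1 Z]
  unfold P
  rw [← eqv0.tsum_eq, ENNReal.tsum_toReal_eq (fun _ => by simp [g])]
  unfold borC
  refine tsum_congr fun p => ?_
  rw [rpow_q]
  unfold g
  rw [ENNReal.toReal_ofReal (Real.exp_nonneg _)]
  rw [norm_eq, th_eq, th_eq]
  simp only [eqv0, Z, QuadraticAlgebra.equivProd_symm_apply, QuadraticAlgebra.re_add, QuadraticAlgebra.im_add,
    QuadraticAlgebra.re_one, QuadraticAlgebra.im_one]
  push_cast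
  congr 1
  ring

lemma cos_int (n : ℤ) : Real.cos (2 * Real.pi * ((n : ℝ) / 3)) = if 3 ∣ n then 1 else -1/2 := by
  have h3 : Real.cos (2 * Real.pi / 3) = -1/2 := by
    rw [show 2 * Real.pi / 3 = Real.pi - Real.pi / 3 by ring, Real.cos_pi_sub, Real.cos_pi_div_three]
    norm_num
  split_ifs with h
  · obtain ⟨m, rfl⟩ := h
    rw [← Real.cos_int_mul_two_pi m]; congr 1; push_cast; ring
  · have : n % 3 = 1 ∨ n % 3 = 2 := by omega
    rcases this with h | h
    · have : n = 1 + 3 * (n / 3) := by omega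
      rw [this, ← h3, ← Real.cos_add_int_mul_two_pi (2 * Real.pi / 3) (n / 3)]; congr 1; push_cast; ring
    · have : n = -1 + 3 * (n / 3 + 1) := by omega
      rw [this, ← h3, ← Real.cos_neg, ← Real.cos_add_int_mul_two_pi (2 * Real.pi / 3) (-(n / 3 + 1))]
      congr 1; push_cast; ring

lemma B_eq : borB (Real.exp (-2 * Real.pi / Real.sqrt 3)) =
    (P (2 * Real.pi / Real.sqrt 3) 0).toReal - (P (2 * Real.pi / Real.sqrt 3) 1).toReal := by
  have hs : 0 < 2 * Real.pi / Real.sqrt 3 := by positivity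
  have hA := A_eq
  set t := 2 * Real.pi / Real.sqrt 3 with ht
  have h1 : borB (Real.exp (-2 * Real.pi / Real.sqrt 3)) = ∑' p : ℤ × ℤ,
      Real.exp (-(t * ((p.1 : ℝ) ^ 2 + p.1 * p.2 + p.2 ^ 2))) * (if 3 ∣ (p.1 - p.2) then 1 else -1/2) := by
    unfold borB
    rw [Complex.re_tsum B_summable]
    refine tsum_congr fun p => ?_
    rw [B_term, Complex.re_ofReal_mul, Complex.exp_ofReal_mul_I_re, ← Int.cast_sub, cos_int]
  have h1s : Summable fun p : ℤ × ℤ =>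
      Real.exp (-(t * ((p.1 : ℝ) ^ 2 + p.1 * p.2 + p.2 ^ 2))) * (if 3 ∣ (p.1 - p.2) then 1 else -1/2 : ℝ) := by
    refine Summable.of_norm_bounded (sumN0 t hs) fun p => ?_
    rw [norm_mul, Real.norm_of_nonneg (Real.exp_nonneg _)]
    refine mul_le_of_le_one_right (Real.exp_nonneg _) ?_
    split_ifs <;> norm_num
  have h2 : borA (Real.exp (-2 * Real.pi / Real.sqrt 3)) = ∑' p : ℤ × ℤ,
      Real.exp (-(t * ((p.1 : ℝ) ^ 2 + p.1 * p.2 + p.2 ^ 2))) := by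
    unfold borA
    refine tsum_congr fun p => ?_
    rw [zpow_q]; push_cast; rfl
  have h3 : borB (Real.exp (-2 * Real.pi / Real.sqrt 3)) + borA (Real.exp (-2 * Real.pi / Real.sqrt 3)) * (1/2) =
      3 / 2 * (P t 0).toReal := by
    rw [h1, h2, ← tsum_mul_right, ← h1s.tsum_add ((sumN0 t hs).mul_right _)]
    have e : ∑' x : E, g t x * (if 3 ∣ (x.re - x.im) then 1 else 0) = P t 0 := by
      rw [split]
      have z1 : ∀ y : E, (3:ℤ) ∣ (th * y).re - (th * y).im := by
        intro y; rw [th_eq]; simp only; omega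
      have z2 : ∀ y : E, ¬ (3:ℤ) ∣ (1 + th * y).re - (1 + th * y).im := by
        intro y; rw [th_eq]
        simp only [QuadraticAlgebra.re_add, QuadraticAlgebra.im_add, QuadraticAlgebra.re_one, QuadraticAlgebra.im_one]; omega
      have z3 : ∀ y : E, ¬ (3:ℤ) ∣ (-1 + th * y).re - (-1 + th * y).im := by
        intro y; rw [th_eq]
        simp only [QuadraticAlgebra.re_add, QuadraticAlgebra.im_add, QuadraticAlgebra.re_neg, QuadraticAlgebra.im_neg, QuadraticAlgebra.re_one, QuadraticAlgebra.im_one]; omega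
      simp only [z1, z2, z3, P, if_true, if_false, mul_one, mul_zero, tsum_zero, add_zero, zero_add]
    rw [← e, ← eqv0.tsum_eq, ENNReal.tsum_toReal_eq (fun _ => by split_ifs <;> simp [g]), ← tsum_mul_left]
    refine tsum_congr fun p => ?_
    rw [g_eqv0, ENNReal.toReal_mul, ENNReal.toReal_ofReal (Real.exp_nonneg _)]
    have : (eqv0 p).re - (eqv0 p).im = p.1 - p.2 := rfl
    rw [this]
    split_ifs <;> simp <;> ring
  rw [hA] at h3
  linarith

lemma real_cubic (t : ℝ) (ht : 0 < t) : (P (t / 3) 1).toReal ^ 3 = 9 * (P t 1).toReal *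
   ((P t 0).toReal ^ 2 + (P t 0).toReal * (P t 1).toReal + (P t 1).toReal ^ 2) := by
  have h := cubic (t / 3)
  have h3 := congrArg ENNReal.toReal (P_one (t / 3))
  rw [show 3 * (t / 3) = t by ring] at h
  have a0 := P0_ne_top t ht
  have a1 := P1_ne_top t ht
  have c1 := P1_ne_top (t / 3) (by positivity)
  have hh : H (t / 3) 1 ≠ ∞ := by
    intro hh
    rw [P_one, hh] at c1
    simp at c1
  lift P t 0 to NNReal using a0 with A
  lift P t 1 to NNReal using a1 with B
  lift P (t / 3) 1 to NNReal using c1 with C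
  lift H (t / 3) 1 to NNReal using hh with D
  have hnn : C ^ 3 = 2 * C ^ 2 * D + 3 * B * (A ^ 2 + A * B + B ^ 2) := by exact_mod_cast h
  have hre : (C : ℝ) ^ 3 = 2 * C ^ 2 * D + 3 * B * (A ^ 2 + A * B + B ^ 2) := by exact_mod_cast hnn
  simp only [ENNReal.toReal_mul, ENNReal.toReal_ofNat, ENNReal.coe_toReal] at h3 ⊢
  linear_combination 3 * hre - 2 * (C : ℝ) ^ 2 * h3

end Hex

theorem hexagonal_temperature_ratio :
    borB (Real.exp (-2 * Real.pi / Real.sqrt 3)) / borA (Real.exp (-2 * Real.pi / Real.sqrt 3)) =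
      (2 : ℝ) ^ (-(1/3) : ℝ) := by
  have hs : 0 < 2 * Real.pi / Real.sqrt 3 := by positivity
  have hc := Hex.real_cubic _ hs
  have hB := Hex.B_eq
  have hA := Hex.A_eq
  have hC := Hex.C_eq
  have hBC := Hex.B_eq_C
  rw [← hC, ← hBC] at hc
  have hb0 : 0 ≤ borB (Real.exp (-2 * Real.pi / Real.sqrt 3)) := by
    rw [hBC, hC]; exact ENNReal.toReal_nonneg
  have hapos : 0 < borA (Real.exp (-2 * Real.pi / Real.sqrt 3)) := by
    have h2 : borA (Real.exp (-2 * Real.pi / Real.sqrt 3)) = ∑' p : ℤ × ℤ,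
      Real.exp (-(2 * Real.pi / Real.sqrt 3 * ((p.1 : ℝ) ^ 2 + p.1 * p.2 + p.2 ^ 2))) := by
      unfold borA
      refine tsum_congr fun p => ?_
      rw [Hex.zpow_q]; push_cast; rfl
    rw [h2]
    exact (Hex.sumN0 _ hs).tsum_pos (fun _ => Real.exp_nonneg _) 0 (Real.exp_pos _)
  generalize borB (Real.exp (-2 * Real.pi / Real.sqrt 3)) = b at *
  generalize borA (Real.exp (-2 * Real.pi / Real.sqrt 3)) = a at *
  have key : 2 * b ^ 3 = a ^ 3 := by
    have : b ^ 3 = a ^ 3 - b ^ 3 := by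
      rw [hA]; nth_rw 2 [hB]; rw [hc]; ring
    linarith
  have h3 : (b / a) ^ 3 = 1 / 2 := by
    rw [div_pow, ← key]
    have : b ≠ 0 := by
      rintro rfl
      have : a ^ 3 = 0 := by rw [← key]; ring
      exact hapos.ne' (by simpa using this)
    field_simp
  have h4 : ((2 : ℝ) ^ (-(1/3) : ℝ)) ^ 3 = 1 / 2 := by
    rw [← Real.rpow_natCast, ← Real.rpow_mul (by norm_num)]
    norm_num
  exact (pow_left_inj₀ (by positivity) (by positivity) (by norm_num)).mp (h3.trans h4.symm)
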